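/- Let d ≥ 3 and let X₁,…,X_N and Y₁,…,Y_N be 2N independent random points uniformly distributed in [0,1]^d, with L_N = L_MBM(X₁,…,X_N; Y₁,…,Y_N). If E(L_N)/N^{1-1/d} converges to a constant β as N → ∞, then (with the X_i, Y_i coming from two infinite i.i.d. uniform sequences) L_N/N^{1-1/d} → β almost surely as N → ∞. -/

import Mathlib

open MeasureTheory ProbabilityTheory Filter

noncomputable section

/-- The unit cube `[0,1]^d` in Euclidean space `ℝ^d`. -/
def unitCube (d : ℕ) : Set (EuclideanSpace ℝ (Fin d)) :=
  {x | ∀ i, x i ∈ Set.Icc (0 : ℝ) 1}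

/-- The uniform probability measure on the unit cube `[0,1]^d`
(the cube has Lebesgue measure one, so the restriction of Lebesgue measure
to the cube is the uniform probability measure on it). -/
def unifCube (d : ℕ) : Measure (EuclideanSpace ℝ (Fin d)) :=
  volume.restrict (unitCube d)

/-- `LMBMon X Y A B` is the minimum total Euclidean length of a partial bipartite
matching pairing `min A.card B.card` of the points `X j, j ∈ A` with as many of the
points `Y j, j ∈ B`, each pair consisting of one `X`-point and one `Y`-point. -/
def LMBMon {d N₁ N₂ : ℕ} (X : Fin N₁ → EuclideanSpace ℝ (Fin d))
    (Y : Fin N₂ → EuclideanSpace ℝ (Fin d)) (A : Finset (Fin N₁)) (B : Finset (Fin N₂)) : ℝ :=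
  sInf { s | ∃ (σ : Fin (min A.card B.card) ↪ Fin N₁) (τ : Fin (min A.card B.card) ↪ Fin N₂),
    (∀ i, σ i ∈ A) ∧ (∀ i, τ i ∈ B) ∧ s = ∑ i, dist (X (σ i)) (Y (τ i)) }

/-- `LMBM X Y` : the minimum total Euclidean length of a bipartite matching between the
points of `X` and the points of `Y`; if the two families have different cardinalities
`N₁ ≠ N₂`, it is the minimum length of a partial matching pairing `min N₁ N₂` points of
each family, leaving `|N₁ - N₂|` points unmatched. -/
def LMBM {d N₁ N₂ : ℕ} (X : Fin N₁ → EuclideanSpace ℝ (Fin d))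
    (Y : Fin N₂ → EuclideanSpace ℝ (Fin d)) : ℝ :=
  LMBMon X Y Finset.univ Finset.univ

/-- `MP d lam`: the expected length of a minimum bipartite matching in the Poissonized
model on `[0,1]^d` with intensity `lam`: the numbers `n₁, n₂` of points of the two
families are independent Poisson(lam) variables and the points are i.i.d. uniform
on the cube. -/
def MP (d : ℕ) (lam : ℝ) : ℝ :=
  ∑' n₁ : ℕ, ∑' n₂ : ℕ,
    (Real.exp (-lam) * lam ^ n₁ / n₁.factorial) *
      ((Real.exp (-lam) * lam ^ n₂ / n₂.factorial) *
        ∫ p : (Fin n₁ → EuclideanSpace ℝ (Fin d)) × (Fin n₂ → EuclideanSpace ℝ (Fin d)),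
          LMBM p.1 p.2 ∂ ((Measure.pi fun _ => unifCube d).prod (Measure.pi fun _ => unifCube d)))

end
open scoped NNReal in
lemma mcd_aux {E : Type*} [MeasurableSpace E] (μ : Measure E) [IsProbabilityMeasure μ]
    (c : ℝ≥0) (M : ℝ) (t : ℝ) : ∀ (n : ℕ) (f : (Fin n → E) → ℝ), Measurable f →
    (∀ z, |f z| ≤ M) → (∀ z k e, |f (Function.update z k e) - f z| ≤ c) →
    ∫ z, Real.exp (t * (f z - ∫ w, f w ∂(Measure.pi fun _ => μ))) ∂(Measure.pi fun _ => μ)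
      ≤ Real.exp (n * c ^ 2 * t ^ 2 / 2) := by
  intro n
  induction n with
  | zero =>
    intro f hf hM hc
    have h : ∀ z, f z = f default := fun z => congrArg f (Subsingleton.elim _ _)
    have h2 : ∫ w, f w ∂(Measure.pi fun _ : Fin 0 => μ) = f default := by
      simp [h]
    rw [h2]
    simp [h]
  | succ n ih =>
    intro f hf hM hc
    set P := Measure.pi fun _ : Fin n => μ with hP
    have hmp := (measurePreserving_piFinSuccAbove (fun _ : Fin (n+1) => μ) 0).symm
    set φ := (MeasurableEquiv.piFinSuccAbove (fun _ : Fin (n+1) => E) 0).symm with hφ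
    have hφe : ∀ x y, φ (x, y) = Fin.cons x y := by
      intro x y
      simp [hφ, MeasurableEquiv.piFinSuccAbove, Fin.consEquiv]
    have hint : ∀ g : (Fin (n+1) → E) → ℝ, ∫ z, g z ∂(Measure.pi fun _ => μ)
        = ∫ p, g (φ p) ∂(μ.prod P) := by
      intro g
      exact (hmp.integral_comp φ.measurableEmbedding g).symm
    have hfm : Measurable fun p : E × (Fin n → E) => f (φ p) := hf.comp φ.measurable
    have hfi : Integrable (fun p : E × (Fin n → E) => f (φ p)) (μ.prod P) :=
      Integrable.of_bound hfm.aestronglyMeasurable M (ae_of_all _ fun p => hM _)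
    set m := ∫ w, f w ∂(Measure.pi fun _ => μ) with hm
    set g : E → ℝ := fun x => ∫ y, f (φ (x, y)) ∂P with hg
    have hgm : m = ∫ x, g x ∂μ := by
      rw [hm, hint, integral_prod _ hfi]
    have hgmeas : Measurable g :=
      (hfm.stronglyMeasurable.integral_prod_right (ν := P)).measurable
    have hxm : ∀ x, Measurable fun y => f (φ (x, y)) := fun x =>
      hfm.comp measurable_prodMk_left
    have hxi : ∀ x, Integrable (fun y => f (φ (x, y))) P := fun x =>
      Integrable.of_bound (hxm x).aestronglyMeasurable M (ae_of_all _ fun p => hM _)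
    have hgd : ∀ x x', |g x - g x'| ≤ c := by
      intro x x'
      rw [hg]
      simp only
      rw [← integral_sub (hxi x) (hxi x')]
      have := norm_integral_le_of_norm_le_const (μ := P) (C := c)
        (f := fun y => f (φ (x, y)) - f (φ (x', y))) (ae_of_all _ fun y => by
          have := hc (φ (x', y)) 0 x
          rw [hφe, Fin.update_cons_zero, ← hφe, ← hφe] at this
          simpa using this)
      simpa using this
    have hgM : ∀ x, |g x| ≤ M := by
      intro x
      have := norm_integral_le_of_norm_le_const (μ := P) (C := M)
        (f := fun y => f (φ (x, y))) (ae_of_all _ fun y => hM _)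
      simpa using this
    have hE : ∃ x0 : E, True := by
      haveI : Nonempty E := nonempty_of_isProbabilityMeasure μ
      exact ⟨Classical.arbitrary E, trivial⟩
    obtain ⟨x0, -⟩ := hE
    have hsub := hasSubgaussianMGF_of_mem_Icc (μ := μ) (X := g) (a := g x0 - c) (b := g x0 + c)
      hgmeas.aemeasurable (ae_of_all _ fun x => by
        have := abs_le.1 (hgd x x0)
        constructor <;> linarith [this.1, this.2])
    have hpar : ((‖(g x0 + c) - (g x0 - c)‖₊ / 2) ^ 2 : ℝ≥0) = c ^ 2 := by
      congr 1
      apply NNReal.eq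
      push_cast
      rw [Real.norm_eq_abs, abs_of_nonneg (by have := c.2; linarith [NNReal.coe_nonneg c])]
      ring
    rw [hpar, ← hgm] at hsub
    have h1 := hsub.mgf_le t
    rw [mgf] at h1
    have hei : Integrable (fun p => Real.exp (t * (f (φ p) - m))) (μ.prod P) := by
      refine Integrable.of_bound (Real.measurable_exp.comp
        ((hfm.sub_const m).const_mul t)).aestronglyMeasurable
        (Real.exp (|t| * (M + |m|))) (ae_of_all _ fun p => ?_)
      rw [Real.norm_eq_abs, Real.abs_exp, Real.exp_le_exp]
      refine (le_abs_self _).trans ?_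
      rw [abs_mul]
      gcongr
      exact (abs_sub _ _).trans (by gcongr; exact hM _)
    rw [hint, integral_prod _ hei]
    calc ∫ x, ∫ y, Real.exp (t * (f (φ (x, y)) - m)) ∂P ∂μ
        ≤ ∫ x, Real.exp (n * c ^ 2 * t ^ 2 / 2) * Real.exp (t * (g x - m)) ∂μ := by
          refine integral_mono hei.integral_prod_left ((hsub.integrable_exp_mul t).const_mul _) ?_
          intro x
          have := ih (fun y => f (φ (x, y))) (hxm x) (fun _ => hM _) (by
            intro z k e
            have := hc (φ (x, z)) k.succ e
            rwa [hφe, ← Fin.cons_update, ← hφe, ← hφe] at this)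
          simp only
          calc ∫ y, Real.exp (t * (f (φ (x, y)) - m)) ∂P
              = ∫ y, Real.exp (t * (f (φ (x, y)) - g x)) * Real.exp (t * (g x - m)) ∂P := by
                congr 1; ext y; rw [← Real.exp_add]; ring_nf
            _ = (∫ y, Real.exp (t * (f (φ (x, y)) - g x)) ∂P) * Real.exp (t * (g x - m)) :=
                integral_mul_const _ _
            _ ≤ _ := by gcongr
      _ = Real.exp (n * c ^ 2 * t ^ 2 / 2) * ∫ x, Real.exp (t * (g x - m)) ∂μ :=
          integral_const_mul _ _
      _ ≤ Real.exp (n * c ^ 2 * t ^ 2 / 2) * Real.exp ((c ^ 2 : ℝ≥0) * t ^ 2 / 2) := by gcongr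
      _ = _ := by rw [← Real.exp_add]; push_cast; ring_nf

open scoped NNReal in
lemma mcd {E : Type*} [MeasurableSpace E] (μ : Measure E) [IsProbabilityMeasure μ]
    (c : ℝ≥0) (M : ℝ) (n : ℕ) (f : (Fin n → E) → ℝ) (hf : Measurable f)
    (hM : ∀ z, |f z| ≤ M) (hc : ∀ z k e, |f (Function.update z k e) - f z| ≤ c) :
    HasSubgaussianMGF (fun z => f z - ∫ w, f w ∂(Measure.pi fun _ => μ)) (n * c ^ 2)
      (Measure.pi fun _ => μ) where
  integrable_exp_mul t := by
    set m := ∫ w, f w ∂(Measure.pi fun _ => μ)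
    refine Integrable.of_bound (by fun_prop) (Real.exp (|t| * (M + |m|))) (ae_of_all _ fun p => ?_)
    rw [Real.norm_eq_abs, Real.abs_exp, Real.exp_le_exp]
    refine (le_abs_self _).trans ?_
    rw [abs_mul]
    gcongr
    exact (abs_sub _ _).trans (by gcongr; exact hM _)
  mgf_le t := by
    have := mcd_aux μ c M t n f hf hM hc
    rw [mgf]
    simpa using this

lemma LMBM_le {d N : ℕ} (X Y X' Y' : Fin N → EuclideanSpace ℝ (Fin d)) :
    LMBM X Y ≤ LMBM X' Y' + (∑ i, dist (X i) (X' i) + ∑ i, dist (Y i) (Y' i)) := by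
  rw [← sub_le_iff_le_add]
  apply le_csInf
  · refine ⟨_, Fin.castLEEmb (by simp), Fin.castLEEmb (by simp), by simp, by simp, rfl⟩
  · rintro s ⟨σ, τ, hσ, hτ, rfl⟩
    rw [sub_le_iff_le_add]
    have h0 : LMBM X Y ≤ ∑ i, dist (X (σ i)) (Y (τ i)) := by
      apply csInf_le
      · refine ⟨0, ?_⟩
        rintro s ⟨σ, τ, hσ, hτ, rfl⟩
        positivity
      · exact ⟨σ, τ, hσ, hτ, rfl⟩
    have hs : ∀ (k : ℕ) (σ : Fin k ↪ Fin N) (h : Fin N → ℝ), (∀ i, 0 ≤ h i) →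
        ∑ i, h (σ i) ≤ ∑ i, h i := by
      intro k σ h hh
      rw [← Finset.sum_map Finset.univ σ h]
      exact Finset.sum_le_univ_sum_of_nonneg hh
    have h1 := hs _ σ (fun i => dist (X i) (X' i)) (fun _ => dist_nonneg)
    have h2 := hs _ τ (fun i => dist (Y i) (Y' i)) (fun _ => dist_nonneg)
    have h3 : ∑ i, dist (X (σ i)) (Y (τ i)) ≤ ∑ i, dist (X' (σ i)) (Y' (τ i))
        + (∑ i, dist (X (σ i)) (X' (σ i)) + ∑ i, dist (Y (τ i)) (Y' (τ i))) := by
      rw [← Finset.sum_add_distrib, ← Finset.sum_add_distrib]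
      refine Finset.sum_le_sum fun i _ => ?_
      have := dist_triangle4 (X (σ i)) (X' (σ i)) (Y' (τ i)) (Y (τ i))
      rw [dist_comm (Y' _) (Y _)] at this
      linarith
    linarith

lemma LMBM_abs {d N : ℕ} (X Y X' Y' : Fin N → EuclideanSpace ℝ (Fin d)) :
    |LMBM X Y - LMBM X' Y'| ≤ ∑ i, dist (X i) (X' i) + ∑ i, dist (Y i) (Y' i) := by
  rw [abs_le]
  have h1 := LMBM_le X Y X' Y'
  have h2 := LMBM_le X' Y' X Y
  simp only [dist_comm (X' _), dist_comm (Y' _)] at h2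
  constructor <;> linarith

lemma LMBM_cont {d N : ℕ} : Continuous fun p : (Fin N → EuclideanSpace ℝ (Fin d)) ×
    (Fin N → EuclideanSpace ℝ (Fin d)) => LMBM p.1 p.2 := by
  rw [continuous_iff_continuousAt]
  intro p
  rw [ContinuousAt, tendsto_iff_dist_tendsto_zero]
  have hc : Continuous fun q : (Fin N → EuclideanSpace ℝ (Fin d)) ×
    (Fin N → EuclideanSpace ℝ (Fin d)) =>
      ∑ i, dist (q.1 i) (p.1 i) + ∑ i, dist (q.2 i) (p.2 i) := by fun_prop
  refine squeeze_zero (fun _ => dist_nonneg) (fun q => LMBM_abs q.1 q.2 p.1 p.2) ?_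
  simpa using hc.tendsto p

lemma summable_exp_rpow (a p : ℝ) (ha : 0 < a) (hp : 0 < p) :
    Summable fun N : ℕ => Real.exp (-a * (N : ℝ) ^ p) := by
  have h := isLittleO_exp_neg_mul_rpow_atTop ha (-2 / p)
  have hk : Tendsto (fun N : ℕ => (N : ℝ) ^ p) atTop atTop :=
    (tendsto_rpow_atTop hp).comp tendsto_natCast_atTop_atTop
  have h2 := (h.comp_tendsto hk).isBigO
  refine summable_of_isBigO_nat (g := fun N : ℕ => (N : ℝ) ^ (-2 : ℝ)) ?_ ?_
  · exact Real.summable_nat_rpow.2 (by norm_num)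
  · refine h2.congr (fun _ => rfl) (fun N => ?_)
    simp only [Function.comp]
    rw [← Real.rpow_mul (Nat.cast_nonneg N)]
    congr 1
    field_simp

open Classical in
lemma cube_dist {d : ℕ} {x y : EuclideanSpace ℝ (Fin d)} (hx : x ∈ unitCube d)
    (hy : y ∈ unitCube d) : dist x y ≤ d := by
  rw [EuclideanSpace.dist_eq]
  have h : ∑ i, dist (x i) (y i) ^ 2 ≤ (d : ℝ) := by
    calc ∑ i, dist (x i) (y i) ^ 2 ≤ ∑ i : Fin d, (1 : ℝ) := by
          refine Finset.sum_le_sum fun i _ => ?_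
          have h1 := hx i
          have h2 := hy i
          rw [Real.dist_eq, sq_abs]
          obtain ⟨a, b⟩ := h1
          obtain ⟨a', b'⟩ := h2
          nlinarith
      _ = d := by simp
  refine (Real.sqrt_le_sqrt h).trans ?_
  rw [Real.sqrt_le_left (by positivity)]
  rcases Nat.eq_zero_or_pos d with h | h
  · simp [h]
  · have : (1 : ℝ) ≤ d := by exact_mod_cast h
    nlinarith

open Classical in
/-- Clip to the cube. -/
noncomputable def clipC {d : ℕ} (x : EuclideanSpace ℝ (Fin d)) : EuclideanSpace ℝ (Fin d) :=
  if x ∈ unitCube d then x else 0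

lemma zero_mem_cube {d : ℕ} : (0 : EuclideanSpace ℝ (Fin d)) ∈ unitCube d := by
  intro i; simp

lemma clipC_mem {d : ℕ} (x : EuclideanSpace ℝ (Fin d)) : clipC x ∈ unitCube d := by
  unfold clipC
  split_ifs with h
  · exact h
  · exact zero_mem_cube

lemma meas_cube {d : ℕ} : MeasurableSet (unitCube d) := by
  have : unitCube d = ⋂ i, {x : EuclideanSpace ℝ (Fin d) | x i ∈ Set.Icc (0 : ℝ) 1} := by
    ext; simp [unitCube]
  rw [this]
  refine MeasurableSet.iInter fun i => ?_
  exact measurableSet_Icc.preimage (by fun_prop : Measurable fun x : EuclideanSpace ℝ (Fin d) => x i)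

lemma meas_clipC {d : ℕ} : Measurable (clipC (d := d)) := by
  unfold clipC
  exact Measurable.ite meas_cube measurable_id measurable_const

/-- the clipped functional -/
noncomputable def FL (d N : ℕ) (z : Fin (N + N) → EuclideanSpace ℝ (Fin d)) : ℝ :=
  LMBM (fun i => clipC (z (Fin.castAdd N i))) (fun j => clipC (z (Fin.natAdd N j)))

lemma FL_meas (d N : ℕ) : Measurable (FL d N) := by
  unfold FL
  refine LMBM_cont.measurable.comp (f := fun z : Fin (N + N) → EuclideanSpace ℝ (Fin d) =>
    ((fun i => clipC (z (Fin.castAdd N i))), (fun j => clipC (z (Fin.natAdd N j))))) ?_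
  refine Measurable.prodMk ?_ ?_
  · exact measurable_pi_lambda _ fun i => meas_clipC.comp (measurable_pi_apply _)
  · exact measurable_pi_lambda _ fun i => meas_clipC.comp (measurable_pi_apply _)

lemma FL_abs (d N : ℕ) (z z' : Fin (N + N) → EuclideanSpace ℝ (Fin d)) :
    |FL d N z - FL d N z'| ≤ ∑ k, dist (clipC (z k)) (clipC (z' k)) := by
  rw [Fin.sum_univ_add]
  exact LMBM_abs _ _ _ _

lemma FL_bdd (d N : ℕ) (z : Fin (N + N) → EuclideanSpace ℝ (Fin d)) :
    |FL d N z| ≤ |FL d N 0| + (N + N : ℕ) * d := by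
  have h := FL_abs d N z 0
  have h2 : ∑ k, dist (clipC (z k)) (clipC ((0 : Fin (N + N) → EuclideanSpace ℝ (Fin d)) k))
      ≤ ∑ k : Fin (N + N), (d : ℝ) :=
    Finset.sum_le_sum fun k _ => cube_dist (clipC_mem _) (clipC_mem _)
  simp only [Finset.sum_const, Finset.card_univ, Fintype.card_fin, nsmul_eq_mul] at h2
  have h3 := abs_sub_abs_le_abs_sub (FL d N z) (FL d N 0)
  linarith

lemma FL_diff (d N : ℕ) (z : Fin (N + N) → EuclideanSpace ℝ (Fin d)) (k e) :
    |FL d N (Function.update z k e) - FL d N z| ≤ d := by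
  refine (FL_abs d N _ _).trans ?_
  rw [Finset.sum_eq_single k]
  · exact cube_dist (clipC_mem _) (clipC_mem _)
  · intro b _ hb
    simp [Function.update_of_ne hb]
  · simp

lemma tail_bound {Ω : Type*} [MeasurableSpace Ω] {P : Measure Ω} [IsProbabilityMeasure P]
    {d : ℕ} (X Y : ℕ → Ω → EuclideanSpace ℝ (Fin d))
    (hmeas : ∀ n, Measurable (Sum.elim X Y n))
    (hindep : iIndepFun (Sum.elim X Y) P)
    (hunif : ∀ n, Measure.map (Sum.elim X Y n) P = unifCube d) (N : ℕ) (ε : ℝ) (hε : 0 ≤ ε) :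
    P {ω | ε ≤ |LMBM (fun i : Fin N => X i ω) (fun j : Fin N => Y j ω) -
      ∫ ω, LMBM (fun i : Fin N => X i ω) (fun j : Fin N => Y j ω) ∂P|} ≤
      ENNReal.ofReal (2 * Real.exp (-ε ^ 2 / (4 * N * d ^ 2))) := by
  haveI : IsProbabilityMeasure (unifCube d) := by
    rw [← hunif (Sum.inl 0)]
    exact Measure.isProbabilityMeasure_map (hmeas _).aemeasurable
  set g : Fin (N + N) → ℕ ⊕ ℕ := fun k =>
    Sum.map (fun i : Fin N => (i : ℕ)) (fun i : Fin N => (i : ℕ)) (finSumFinEquiv.symm k) with hg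
  have hgi : g.Injective :=
    (Function.Injective.sumMap Fin.val_injective Fin.val_injective).comp
      finSumFinEquiv.symm.injective
  have hind := hindep.precomp hgi
  have hmap := (iIndepFun_iff_map_fun_eq_pi_map (fun i => (hmeas (g i)).aemeasurable)).1 hind
  simp only [hunif] at hmap
  set Z : Ω → Fin (N + N) → EuclideanSpace ℝ (Fin d) := fun ω k => Sum.elim X Y (g k) ω with hZ
  have hZm : Measurable Z := measurable_pi_lambda _ fun k => hmeas _
  have hsub := mcd (unifCube d) (d : NNReal) _ (N + N) (FL d N) (FL_meas d N) (FL_bdd d N)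
    (fun z k e => by simpa using FL_diff d N z k e)
  rw [← hmap] at hsub
  have hsub2 := hsub.of_map hZm.aemeasurable
  rw [integral_map hZm.aemeasurable (FL_meas d N).aestronglyMeasurable] at hsub2
  have hcube : ∀ᵐ ω ∂P, ∀ n, Sum.elim X Y n ω ∈ unitCube d := by
    rw [ae_all_iff]
    intro n
    refine ae_of_ae_map (hmeas n).aemeasurable (p := fun x => x ∈ unitCube d) ?_
    rw [hunif]
    exact ae_restrict_mem meas_cube
  have hae : ∀ᵐ ω ∂P, FL d N (Z ω) = LMBM (fun i : Fin N => X i ω) (fun j : Fin N => Y j ω) := by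
    filter_upwards [hcube] with ω hω
    have hcl : ∀ n, clipC (Sum.elim X Y n ω) = Sum.elim X Y n ω := fun n => if_pos (hω n)
    simp only [FL, hZ, hcl]
    simp only [hg, finSumFinEquiv_symm_apply_castAdd, finSumFinEquiv_symm_apply_natAdd,
      Sum.map_inl, Sum.map_inr, Sum.elim_inl, Sum.elim_inr]
  rw [← integral_congr_ae hae]
  set m := ∫ ω, FL d N (Z ω) ∂P
  have e1 := hsub2.measure_ge_le hε
  have e2 := hsub2.neg.measure_ge_le hε
  have hp : -ε ^ 2 / (2 * (((N + N : ℕ) * (d : NNReal) ^ 2 : NNReal) : ℝ))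
      = -ε ^ 2 / (4 * N * d ^ 2) := by
    push_cast; ring_nf
  rw [hp] at e1 e2
  have hfin : P.real {ω | ε ≤ |FL d N (Z ω) - m|} ≤ 2 * Real.exp (-ε ^ 2 / (4 * N * d ^ 2)) := by
    refine (measureReal_mono (?_ : _ ⊆ {ω | ε ≤ ((fun z => FL d N z - m) ∘ Z) ω} ∪
      {ω | ε ≤ (-((fun z => FL d N z - m) ∘ Z)) ω})).trans ((measureReal_union_le _ _).trans ?_)
    · intro ω hω
      simpa [le_abs] using hω
    · linarith
  rw [measure_congr (t := {ω | ε ≤ |FL d N (Z ω) - m|})]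
  · rw [← ofReal_measureReal]
    exact ENNReal.ofReal_le_ofReal hfin
  · filter_upwards [hae] with ω hω
    change (ε ≤ _) = (ε ≤ _)
    rw [hω]

theorem as_convergence_of_mean_convergence_MBM
    (d : ℕ) (hd : 3 ≤ d)
    (Ω : Type*) [MeasureSpace Ω] [IsProbabilityMeasure (ℙ : Measure Ω)]
    (X Y : ℕ → Ω → EuclideanSpace ℝ (Fin d))
    (hmeas : ∀ n, Measurable (Sum.elim X Y n))
    (hindep : iIndepFun (Sum.elim X Y) ℙ)
    (hunif : ∀ n, Measure.map (Sum.elim X Y n) ℙ = unifCube d)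
    (β : ℝ)
    (hmean : Tendsto
      (fun N : ℕ =>
        (∫ ω, LMBM (fun i : Fin N => X i ω) (fun j : Fin N => Y j ω) ∂ℙ) /
          (N : ℝ) ^ (1 - 1 / (d : ℝ)))
      atTop (nhds β)) :
    ∀ᵐ ω ∂(ℙ : Measure Ω),
      Tendsto
        (fun N : ℕ =>
          LMBM (fun i : Fin N => X i ω) (fun j : Fin N => Y j ω) /
            (N : ℝ) ^ (1 - 1 / (d : ℝ)))
        atTop (nhds β) := by
  set e : ℝ := 1 - 1 / (d : ℝ) with he
  set L : ℕ → Ω → ℝ := fun N ω => LMBM (fun i : Fin N => X i ω) (fun j : Fin N => Y j ω) with hL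
  have hd0 : (3 : ℝ) ≤ d := by exact_mod_cast hd
  have key : ∀ δ : ℝ, 0 < δ → ∀ᵐ ω ∂(ℙ : Measure Ω), ∀ᶠ N : ℕ in atTop,
      |L N ω - ∫ ω, L N ω ∂ℙ| < δ * (N : ℝ) ^ e := by
    intro δ hδ
    have hsum : (∑' N : ℕ, (ℙ : Measure Ω) {ω | δ * (N : ℝ) ^ e ≤ |L N ω - ∫ ω, L N ω ∂ℙ|}) ≠ ⊤ := by
      have hs : Summable fun N : ℕ =>
          2 * Real.exp (-(δ ^ 2 / (4 * d ^ 2)) * (N : ℝ) ^ (1 - 2 / (d : ℝ))) := by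
        refine (summable_exp_rpow _ _ (by positivity) ?_).mul_left 2
        rw [sub_pos, div_lt_one (by linarith)]
        linarith
      refine ne_top_of_le_ne_top hs.tsum_ofReal_ne_top (ENNReal.tsum_le_tsum fun N => ?_)
      refine (tail_bound X Y hmeas hindep hunif N (δ * (N : ℝ) ^ e) (by positivity)).trans ?_
      rcases Nat.eq_zero_or_pos N with h | h
      · subst h
        have h2 : (1 - 2 / (d : ℝ)) ≠ 0 := by
          have : 2 / (d : ℝ) < 1 := by rw [div_lt_one (by linarith)]; linarith
          linarith
        simp [Real.zero_rpow h2]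
      · refine le_of_eq ?_
        congr 3
        have hN : (0 : ℝ) < N := by exact_mod_cast h
        have hpow : ((N : ℝ) ^ e) ^ 2 = (N : ℝ) ^ (1 - 2 / (d : ℝ)) * N := by
          rw [← Real.rpow_natCast, ← Real.rpow_mul hN.le]
          nth_rewrite 3 [← Real.rpow_one (N : ℝ)]
          rw [← Real.rpow_add hN]
          congr 1
          rw [he]; push_cast; ring
        rw [mul_pow, hpow]
        field_simp
    filter_upwards [ae_eventually_notMem hsum] with ω hω
    filter_upwards [hω] with N hN
    simpa using hN
  have key2 : ∀ᵐ ω ∂(ℙ : Measure Ω), ∀ k : ℕ, ∀ᶠ N : ℕ in atTop,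
      |L N ω - ∫ ω, L N ω ∂ℙ| < (1 / ((k : ℝ) + 1)) * (N : ℝ) ^ e := by
    rw [ae_all_iff]
    intro k
    exact key _ (by positivity)
  filter_upwards [key2] with ω hω
  have hz : Tendsto (fun N : ℕ => (L N ω - ∫ ω, L N ω ∂ℙ) / (N : ℝ) ^ e) atTop (nhds 0) := by
    rw [Metric.tendsto_nhds]
    intro δ hδ
    obtain ⟨k, hk⟩ := exists_nat_one_div_lt hδ
    filter_upwards [hω k, eventually_gt_atTop 0] with N hN hN0
    have hp : (0 : ℝ) < (N : ℝ) ^ e := Real.rpow_pos_of_pos (by exact_mod_cast hN0) _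
    rw [Real.dist_eq, sub_zero, abs_div, abs_of_pos hp, div_lt_iff₀ hp]
    exact hN.trans (by gcongr)
  have := hz.add hmean
  rw [zero_add] at this
  refine this.congr fun N => ?_
  rw [← add_div]
  congr 1
  simp [hL]
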